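/- Let λ ∈ Λ_I⁺. (1) For any subsystem Φ' ⊆ Φ: Ψ_λ⁺ ∩ Φ' = Ψ⁺(λ|_{Φ'}, Φ_I ∩ Φ', Φ'). (2) If β ∈ Φ \ Φ_I, then Ψ_λ⁺⁺ ∩ Φ_{β,1} = Ψ⁺⁺(λ|_{Φ_{β,1}}, Φ_I, Φ_{β,1}). (3) If β ∈ Φ \ Φ_λ, then Ψ_λ⁺⁺ ∩ Φ_{β,2} = Ψ⁺⁺(λ|_{Φ_{β,2}}, Φ_I ∩ Φ_{β,2}, Φ_{β,2}). -/

import Mathlib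

open scoped RealInnerProductSpace
open Classical

noncomputable section

namespace JantzenGVM

variable {V : Type*} [NormedAddCommGroup V] [InnerProductSpace ℝ V] [FiniteDimensional ℝ V]

/-- The coroot `α^∨ = 2α/⟨α,α⟩` of a vector `α` (junk value `0` when `α = 0`). -/
def coroot (α : V) : V := (2 / ⟪α, α⟫) • α

/-- The linear functional `v ↦ ⟨v, α^∨⟩`. -/
def corootForm (α : V) : V →ₗ[ℝ] ℝ where
  toFun v := ⟪v, coroot α⟫
  map_add' x y := by simp [inner_add_left]
  map_smul' c x := by simp [inner_smul_left]

lemma corootForm_self {α : V} (h : ⟪α, α⟫ ≠ 0) : corootForm α α = 2 := by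
  simp only [corootForm, coroot, LinearMap.coe_mk, AddHom.coe_mk, real_inner_smul_right]
  field_simp

/-- The reflection `s_α` as a linear automorphism of `V` (the identity when `⟨α,α⟩ = 0`). -/
def reflV (α : V) : V ≃ₗ[ℝ] V :=
  if h : ⟪α, α⟫ = 0 then LinearEquiv.refl ℝ V
  else Module.reflection (corootForm_self h)

/-- `h* = ℂ ⊗ V`, realized as the space of real-linear functionals `V → ℂ` via the
inner product; an element `λ` pairs with a root `α` by `⟨λ, α⟩ = λ α` and with the
coroot by `⟨λ, α^∨⟩ = λ (coroot α)`. -/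
abbrev HStar (V : Type*) [NormedAddCommGroup V] [InnerProductSpace ℝ V] := V →ₗ[ℝ] ℂ

/-- The canonical embedding of `V` into `h*`. -/
def emb (α : V) : HStar V where
  toFun v := (⟪α, v⟫ : ℂ)
  map_add' x y := by simp [inner_add_right]
  map_smul' c x := by simp [inner_smul_right, Complex.real_smul]

/-- The action of a linear automorphism `w` of `V` on `h*`: `(w • λ)(v) = λ(w⁻¹ v)`. -/
def wAct (w : V ≃ₗ[ℝ] V) (l : HStar V) : HStar V := l ∘ₗ (w.symm : V →ₗ[ℝ] V)

/-- The reflection `s_β λ = λ - ⟨λ, β^∨⟩ β` acting on `h*`. -/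
def sRefl (β : V) (l : HStar V) : HStar V := l - l (coroot β) • emb β

/-- The group generated by the reflections in the elements of `Φ'`. -/
def weyl (Φ' : Set V) : Subgroup (V ≃ₗ[ℝ] V) :=
  Subgroup.closure {w | ∃ α ∈ Φ', w = reflV α}

/-- A finite, reduced, crystallographic root system spanning the Euclidean space `V`,
together with a choice of positive system and the corresponding simple system. -/
structure RootSys (V : Type*) [NormedAddCommGroup V] [InnerProductSpace ℝ V]
    [FiniteDimensional ℝ V] where
  Φ : Finset V
  pos : Finset V
  Δ : Finset V
  ne_zero : ∀ α ∈ Φ, α ≠ (0 : V)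
  span_eq_top : Submodule.span ℝ (Φ : Set V) = ⊤
  reduced : ∀ α ∈ Φ, ∀ c : ℝ, c • α ∈ Φ → c = 1 ∨ c = -1
  refl_mem : ∀ α ∈ Φ, ∀ β ∈ Φ, reflV α β ∈ Φ
  crystallographic : ∀ α ∈ Φ, ∀ β ∈ Φ, ∃ n : ℤ, ⟪β, coroot α⟫ = (n : ℝ)
  pos_subset : pos ⊆ Φ
  mem_pos_or : ∀ α ∈ Φ, α ∈ pos ∨ -α ∈ pos
  not_both : ∀ α ∈ pos, -α ∉ pos
  simple_subset : Δ ⊆ pos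
  simple_indep : LinearIndependent ℝ (fun x : {a : V // a ∈ Δ} => x.1)
  simple_gen : ∀ β ∈ pos, ∃ c : V → ℝ, (∀ α ∈ Δ, 0 ≤ c α) ∧ β = ∑ α ∈ Δ, c α • α

/-- A subsystem of the root system: a subset of `Φ` closed under its own reflections. -/
def IsSubsystem (S : RootSys V) (Φ' : Set V) : Prop :=
  Φ' ⊆ (S.Φ : Set V) ∧ ∀ α ∈ Φ', ∀ β ∈ Φ', reflV α β ∈ Φ'

/-- The length of `w`, i.e. the number of positive roots sent to negative roots
(this equals the Coxeter length for elements of the Weyl group). -/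
def len (S : RootSys V) (w : V ≃ₗ[ℝ] V) : ℕ :=
  {β ∈ (S.pos : Set V) | w β ∉ (S.pos : Set V)}.ncard

/-- `Φ_I = ℤI ∩ Φ`, the subsystem generated by a subset `I` of the simple roots. -/
def PhiI (S : RootSys V) (I : Finset V) : Set V :=
  {α ∈ (S.Φ : Set V) | α ∈ Submodule.span ℤ (I : Set V)}

/-- `z` is a positive integer. -/
def IsPosInt (z : ℂ) : Prop := ∃ n : ℤ, 0 < n ∧ z = (n : ℂ)

/-- `z` is an integer. -/
def IsInt (z : ℂ) : Prop := ∃ n : ℤ, z = (n : ℂ)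

/-- `Λ_I⁺ = {λ ∈ h* : ⟨λ, α^∨⟩ ∈ ℤ_{>0} for all α ∈ I}`. -/
def LambdaP (I : Set V) : Set (HStar V) :=
  {l | ∀ α ∈ I, IsPosInt (l (coroot α))}

/-- `Λ⁺(Φ'', Φ') = {ν ∈ ℂΦ' : ⟨ν, α^∨⟩ ∈ ℤ_{>0} for all α ∈ Φ'' ∩ Φ⁺}`. -/
def LambdaPSub (S : RootSys V) (Φ'' Φ' : Set V) : Set (HStar V) :=
  {l | l ∈ Submodule.span ℂ (emb '' Φ') ∧
       ∀ α ∈ Φ'' ∩ (S.pos : Set V), IsPosInt (l (coroot α))}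

/-- `λ` is `Φ''`-regular: `⟨λ, α⟩ ≠ 0` for all `α ∈ Φ''`. -/
def IsRegularOn (Φ'' : Set V) (l : HStar V) : Prop := ∀ α ∈ Φ'', l α ≠ 0

/-- `Ψ⁺(λ, Φ'', Φ') = {β ∈ (Φ' ∩ Φ⁺) \ Φ'' : ⟨λ, β^∨⟩ ∈ ℤ_{>0}}`. -/
def PsiP (S : RootSys V) (Φ'' Φ' : Set V) (l : HStar V) : Set V :=
  {β | β ∈ Φ' ∩ (S.pos : Set V) ∧ β ∉ Φ'' ∧ IsPosInt (l (coroot β))}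

/-- `Ψ⁺⁺(λ, Φ'', Φ') = {β ∈ Ψ⁺(λ, Φ'', Φ') : s_β λ is Φ''-regular}`. -/
def PsiPP (S : RootSys V) (Φ'' Φ' : Set V) (l : HStar V) : Set V :=
  {β ∈ PsiP S Φ'' Φ' l | ∀ α ∈ Φ'', (sRefl β l) α ≠ 0}

/-- The sign function: `sgn(λ, μ) = (-1)^{ℓ(w)}` if `λ, μ` are `Φ''`-regular and
`μ = wλ` for some `w ∈ W(Φ'')`, and `0` otherwise. -/
def sgnW (S : RootSys V) (Φ'' : Set V) (l m : HStar V) : ℤ :=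
  if h : IsRegularOn Φ'' l ∧ IsRegularOn Φ'' m ∧ ∃ w, w ∈ weyl Φ'' ∧ m = wAct w l
  then (-1) ^ len S h.2.2.choose else 0

/-- The Jantzen coefficient `c(λ, μ, Φ'', Φ') = Σ_{β ∈ Ψ⁺⁺(λ,Φ'',Φ')} sgn(s_β λ, μ)`. -/
def jc (S : RootSys V) (Φ'' Φ' : Set V) (l m : HStar V) : ℤ :=
  ∑ᶠ β ∈ PsiPP S Φ'' Φ' l, sgnW S Φ'' (sRefl β l) m

/-- The symmetrized Jantzen coefficient `c̃(λ, μ, Φ'', Φ')`. -/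
def jcSym (S : RootSys V) (Φ'' Φ' : Set V) (l m : HStar V) : ℤ :=
  jc S Φ'' Φ' l m + jc S Φ'' Φ' m l

/-- `θ(λ) = Σ_{w ∈ W_I} (-1)^{ℓ(w)} e^{wλ}` in the free `ℤ`-module on `h*`. -/
def theta (S : RootSys V) (I : Finset V) (l : HStar V) : HStar V →₀ ℤ :=
  ∑ᶠ w ∈ (weyl (PhiI S I) : Set (V ≃ₗ[ℝ] V)),
    Finsupp.single (wAct w l) ((-1) ^ len S w)

/-- `Φ_λ = {α ∈ Φ : ⟨λ, α⟩ = 0}`. -/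
def singSet (S : RootSys V) (l : HStar V) : Set V :=
  {α ∈ (S.Φ : Set V) | l α = 0}

/-- `Φ_{[λ]} = {α ∈ Φ : ⟨λ, α^∨⟩ ∈ ℤ}`. -/
def integralSet (S : RootSys V) (l : HStar V) : Set V :=
  {α ∈ (S.Φ : Set V) | IsInt (l (coroot α))}

/-- `(ℚ A) ∩ Φ`, the intersection of the rational span of `A` with `Φ`.
Taking `A = Φ_I ∪ {β}` gives `Φ_{β,1}`; taking `A = Φ_λ ∪ {β}` gives `Φ_{β,2}`. -/
def ratSpanRoots (S : RootSys V) (A : Set V) : Set V :=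
  {γ ∈ (S.Φ : Set V) | ∃ (t : Finset V) (c : V → ℚ),
    (t : Set V) ⊆ A ∧ γ = ∑ α ∈ t, (c α : ℝ) • α}

/-- `Φ_{β,0}`, the irreducible component of `Φ` containing `β`. -/
def component (S : RootSys V) (β : V) : Set V :=
  {γ ∈ (S.Φ : Set V) |
    Relation.ReflTransGen
      (fun x y => x ∈ (S.Φ : Set V) ∧ y ∈ (S.Φ : Set V) ∧ ⟪x, y⟫ ≠ 0) β γ}

/-- `λ|_{Φ'}`: the unique element of `ℂΦ'` with `⟨λ|_{Φ'}, α^∨⟩ = ⟨λ, α^∨⟩`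
for all `α ∈ Φ'`. -/
def restrictW (Φ' : Set V) (l : HStar V) : HStar V :=
  letI : Nonempty (HStar V) := ⟨0⟩
  Classical.epsilon fun m =>
    m ∈ Submodule.span ℂ (emb '' Φ') ∧ ∀ α ∈ Φ', m (coroot α) = l (coroot α)

/-- `ᴵWᴶ = {w ∈ W : ℓ(uwv) = ℓ(u) + ℓ(w) + ℓ(v) for all u ∈ W_I, v ∈ W_J}`. -/
def doubleCoset (S : RootSys V) (I J : Finset V) : Set (V ≃ₗ[ℝ] V) :=
  {w | w ∈ weyl (S.Φ : Set V) ∧ ∀ u ∈ weyl (PhiI S I), ∀ v ∈ weyl (PhiI S J),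
    len S (u * w * v) = len S u + len S w + len S v}

/-- The fundamental weight `ϖ_j` relative to an enumeration `e` of the simple roots:
the unique element of `h*` with `⟨ϖ_j, α_k^∨⟩ = δ_{jk}`. -/
def fundWeight {n : ℕ} (e : Fin n → V) (j : Fin n) : HStar V :=
  letI : Nonempty (HStar V) := ⟨0⟩
  Classical.epsilon fun m => ∀ k : Fin n, m (coroot (e k)) = if k = j then 1 else 0

/-- The labels of the irreducible Dynkin types. -/
inductive LieType | A | B | C | D | E | F | G
deriving DecidableEq

/-- The Cartan matrix of type `A_n` (1-based indices): entry `(i,j)` is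
`⟨α_i, α_j^∨⟩`. -/
def cartanA (i j : ℕ) : ℤ :=
  if i = j then 2 else if i + 1 = j ∨ j + 1 = i then -1 else 0

/-- The Cartan matrices of the irreducible types in the standard (Bourbaki/Humphreys)
numbering of the Dynkin diagram: `cartanEntry t n i j = ⟨α_i, α_j^∨⟩` (1-based). -/
def cartanEntry : LieType → ℕ → ℕ → ℕ → ℤ
  | .A, _, i, j => cartanA i j
  | .B, n, i, j => if i + 1 = n ∧ j = n then -2 else cartanA i j
  | .C, n, i, j => if i = n ∧ j + 1 = n then -2 else cartanA i j
  | .D, n, i, j =>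
      if i = j then 2
      else if (i + 2 = n ∧ j = n) ∨ (i = n ∧ j + 2 = n) then -1
      else if (i + 1 = n ∧ j = n) ∨ (i = n ∧ j + 1 = n) then 0
      else cartanA i j
  | .E, _, i, j =>
      if i = j then 2
      else if (i = 1 ∧ j = 3) ∨ (i = 3 ∧ j = 1) ∨ (i = 2 ∧ j = 4) ∨ (i = 4 ∧ j = 2) then -1
      else if (i = 1 ∧ j = 2) ∨ (i = 2 ∧ j = 1) ∨ (i = 2 ∧ j = 3) ∨ (i = 3 ∧ j = 2) then 0
      else cartanA i j
  | .F, _, i, j => if i = 2 ∧ j = 3 then -2 else cartanA i j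
  | .G, _, i, j => if i = 2 ∧ j = 1 then -3 else cartanA i j

/-- The standard basis vector `e_k` (1-based index, junk `0` outside `1 ≤ k ≤ n`). -/
def stdE (n k : ℕ) : EuclideanSpace ℝ (Fin n) :=
  if h : 1 ≤ k ∧ k ≤ n then EuclideanSpace.single ⟨k - 1, by omega⟩ 1 else 0

/-- The labels `B`, `C`, `D` of the classical non-`A` types. -/
inductive BCD | B | C | D
deriving DecidableEq

/-- The root set of `B_n` / `C_n` / `D_n` in the standard realization. -/
def bcdRoots (t : BCD) (n : ℕ) : Set (EuclideanSpace ℝ (Fin n)) :=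
  {v | (∃ i j : ℕ, 1 ≤ i ∧ i < j ∧ j ≤ n ∧
          (v = stdE n i - stdE n j ∨ v = -(stdE n i - stdE n j) ∨
           v = stdE n i + stdE n j ∨ v = -(stdE n i + stdE n j))) ∨
       (match t with
        | .B => ∃ i : ℕ, 1 ≤ i ∧ i ≤ n ∧ (v = stdE n i ∨ v = -stdE n i)
        | .C => ∃ i : ℕ, 1 ≤ i ∧ i ≤ n ∧ (v = (2:ℝ) • stdE n i ∨ v = -((2:ℝ) • stdE n i))
        | .D => False)}

/-- The positive roots of `B_n` / `C_n` / `D_n` in the standard realization. -/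
def bcdPos (t : BCD) (n : ℕ) : Set (EuclideanSpace ℝ (Fin n)) :=
  {v | (∃ i j : ℕ, 1 ≤ i ∧ i < j ∧ j ≤ n ∧
          (v = stdE n i - stdE n j ∨ v = stdE n i + stdE n j)) ∨
       (match t with
        | .B => ∃ i : ℕ, 1 ≤ i ∧ i ≤ n ∧ v = stdE n i
        | .C => ∃ i : ℕ, 1 ≤ i ∧ i ≤ n ∧ v = (2:ℝ) • stdE n i
        | .D => False)}

/-- The simple roots of `B_n` / `C_n` / `D_n` in the standard realization. -/
def bcdSimple (t : BCD) (n : ℕ) : Set (EuclideanSpace ℝ (Fin n)) :=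
  {v | (∃ i : ℕ, 1 ≤ i ∧ i < n ∧ v = stdE n i - stdE n (i + 1)) ∨
       (match t with
        | .B => v = stdE n n
        | .C => v = (2:ℝ) • stdE n n
        | .D => v = stdE n (n - 1) + stdE n n)}

/-- The simple root `α_k` of `B_n` / `C_n` / `D_n` (1-based index `k`). -/
def bcdAlpha (t : BCD) (n k : ℕ) : EuclideanSpace ℝ (Fin n) :=
  if k < n then stdE n k - stdE n (k + 1)
  else match t with
  | .B => stdE n n
  | .C => (2:ℝ) • stdE n n
  | .D => stdE n (n - 1) + stdE n n

/-!
The weight `λ|_{Φ'}` has the same pairings as `λ` with the roots and coroots of `Φ'`, so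
restricting can only lose the regularity conditions `⟨s_γ λ, α⟩ ≠ 0` with `α ∈ Φ_I \ Φ'`. For
`Φ' = Φ_{β,1}` there is no such `α`. For `Φ' = Φ_{β,2}` these conditions hold automatically:
`⟨s_γ λ, α⟩ = ⟨λ, s_γ α⟩`, so if it vanishes then `s_γ α ∈ Φ_λ ⊆ Φ'`; and `γ ∈ Φ'`, so `α`, which
differs from `s_γ α` by an integer multiple of `γ`, lies in `Φ'` as well.
-/

section Restriction

variable {E : Type*} [NormedAddCommGroup E] [InnerProductSpace ℝ E]

/-- The embedding `emb` into `h*` as a real-linear map, which lets real spans be pushed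
forward to `h*`. -/
def embLinear : E →ₗ[ℝ] HStar E where
  toFun := emb
  map_add' x y := by ext v; simp [emb, inner_add_left]
  map_smul' c x := by ext v; simp [emb, real_inner_smul_left]

lemma emb_mem_span_image {A : Set E} {v : E} (hv : v ∈ Submodule.span ℝ A) :
    emb v ∈ Submodule.span ℂ (emb '' A) := by
  have h_real : embLinear v ∈ Submodule.span ℝ (embLinear '' A) :=
    Submodule.apply_mem_span_image_of_mem_span embLinear hv
  exact Submodule.span_le_restrictScalars ℝ ℂ (emb '' A) h_real

lemma exists_mem_span_emb_image_eqOn_span (A : Set E) [FiniteDimensional ℝ (Submodule.span ℝ A)]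
    (l : HStar E) :
    ∃ m ∈ Submodule.span ℂ (emb '' A), Set.EqOn m l (Submodule.span ℝ A) := by
  let b := stdOrthonormalBasis ℝ (Submodule.span ℝ A)
  refine ⟨∑ i, l (b i) • emb (b i : E), ?_, fun v hv => ?_⟩
  · exact Submodule.sum_mem _ fun i _ => Submodule.smul_mem _ _ (emb_mem_span_image (b i).2)
  · have h_expand : v = ∑ i, ⟪(b i : E), v⟫ • (b i : E) := by
      simpa using congrArg Subtype.val (b.sum_repr' ⟨v, hv⟩).symm
    calc (∑ i, l (b i) • emb (b i : E)) v
        = ∑ i, ⟪(b i : E), v⟫ • l (b i) := by simp [emb, mul_comm]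
      _ = l (∑ i, ⟪(b i : E), v⟫ • (b i : E)) := by simp only [map_sum, map_smul]
      _ = l v := by rw [← h_expand]

lemma eq_smul_coroot (α : E) : α = (⟪α, α⟫ / 2) • coroot α := by
  rcases eq_or_ne α 0 with rfl | hα
  · simp
  · have hαα : ⟪α, α⟫ ≠ 0 := inner_self_ne_zero.mpr hα
    rw [coroot, smul_smul, div_mul_div_cancel₀ two_ne_zero, div_self hαα, one_smul]

variable {A : Set E} [FiniteDimensional ℝ (Submodule.span ℝ A)] (l : HStar E) {α β : E}

lemma restrictW_apply_coroot (hα : α ∈ A) : restrictW A l (coroot α) = l (coroot α) := by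
  have h_exists : ∃ m ∈ Submodule.span ℂ (emb '' A), ∀ α ∈ A, m (coroot α) = l (coroot α) := by
    obtain ⟨m, hm, hml⟩ := exists_mem_span_emb_image_eqOn_span A l
    exact ⟨m, hm, fun α hα => hml (Submodule.smul_mem _ _ (Submodule.subset_span hα))⟩
  exact (Classical.epsilon_spec h_exists).2 α hα

lemma restrictW_apply (hα : α ∈ A) : restrictW A l α = l α := by
  rw [eq_smul_coroot α, map_smul, map_smul, restrictW_apply_coroot l hα]

lemma sRefl_restrictW_apply (hα : α ∈ A) (hβ : β ∈ A) :
    sRefl β (restrictW A l) α = sRefl β l α := by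
  simp only [sRefl, LinearMap.sub_apply, LinearMap.smul_apply, restrictW_apply l hα,
    restrictW_apply_coroot l hβ]

end Restriction

lemma reflV_apply (γ v : V) : reflV γ v = v - ⟪v, coroot γ⟫ • γ := by
  rcases eq_or_ne γ 0 with rfl | hγ
  · simp [reflV]
  · rw [reflV, dif_neg (inner_self_ne_zero.mpr hγ), Module.reflection_apply]
    rfl

lemma sRefl_apply (γ : V) (l : HStar V) (v : V) : sRefl γ l v = l (reflV γ v) := by
  have h_symm : l (coroot γ) * (⟪γ, v⟫ : ℂ) = (⟪v, coroot γ⟫ : ℂ) * l γ := by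
    simp only [coroot, map_smul, real_inner_smul_right, Complex.real_smul, real_inner_comm v γ]
    push_cast
    ring
  simpa [reflV_apply, sRefl, emb] using h_symm

section Subsystems

variable (S : RootSys V)

lemma psiP_inter_eq (Φ'' : Set V) {Φ' Φ₀ : Set V} (hΦ' : Φ' ⊆ Φ₀) (l : HStar V) :
    PsiP S Φ'' Φ₀ l ∩ Φ' = PsiP S (Φ'' ∩ Φ') Φ' (restrictW Φ' l) := by
  ext γ
  by_cases hγ : γ ∈ Φ'
  · simp [PsiP, hγ, hΦ' hγ, restrictW_apply_coroot l hγ]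
  · simp [PsiP, hγ]

lemma psiPP_inter_eq {Φ'' Φ' Φ₀ : Set V} (hΦ' : Φ' ⊆ Φ₀) {l : HStar V}
    (h_singular : ∀ γ ∈ Φ', ∀ α ∈ Φ'', sRefl γ l α = 0 → α ∈ Φ') :
    PsiPP S Φ'' Φ₀ l ∩ Φ' = PsiPP S (Φ'' ∩ Φ') Φ' (restrictW Φ' l) := by
  have h_regular : ∀ γ ∈ Φ', (∀ α ∈ Φ'', sRefl γ l α ≠ 0) ↔
      ∀ α ∈ Φ'' ∩ Φ', sRefl γ (restrictW Φ' l) α ≠ 0 := by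
    refine fun γ hγ => ⟨fun h α hα => ?_, fun h α hα h_zero => ?_⟩
    · rw [sRefl_restrictW_apply l hα.2 hγ]
      exact h α hα.1
    · have hα' : α ∈ Φ' := h_singular γ hγ α hα h_zero
      exact h α ⟨hα, hα'⟩ (by rwa [sRefl_restrictW_apply l hα' hγ])
  ext γ
  calc γ ∈ PsiPP S Φ'' Φ₀ l ∩ Φ'
      ↔ γ ∈ PsiP S Φ'' Φ₀ l ∩ Φ' ∧ ∀ α ∈ Φ'', sRefl γ l α ≠ 0 := and_right_comm
    _ ↔ γ ∈ PsiP S Φ'' Φ₀ l ∩ Φ' ∧ ∀ α ∈ Φ'' ∩ Φ', sRefl γ (restrictW Φ' l) α ≠ 0 :=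
        and_congr_right fun hγ => h_regular γ hγ.2
    _ ↔ γ ∈ PsiPP S (Φ'' ∩ Φ') Φ' (restrictW Φ' l) := by rw [psiP_inter_eq S Φ'' hΦ' l]; rfl

lemma mem_ratSpanRoots_iff [Module ℚ V] {A : Set V} {γ : V} :
    γ ∈ ratSpanRoots S A ↔ γ ∈ S.Φ ∧ γ ∈ Submodule.span ℚ A := by
  refine and_congr_right fun _ => ⟨?_, fun hγ => ?_⟩
  · rintro ⟨t, c, ht, rfl⟩
    simp only [Rat.cast_smul_eq_qsmul]
    exact Submodule.sum_mem _ fun α hα =>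
      Submodule.smul_mem _ _ (Submodule.subset_span (ht hα))
  · obtain ⟨c, t, ht, -, rfl⟩ := Submodule.mem_span_iff_exists_finset_subset.mp hγ
    exact ⟨t, c, ht, by simp only [Rat.cast_smul_eq_qsmul]⟩

lemma inter_subset_ratSpanRoots (A : Set V) : A ∩ S.Φ ⊆ ratSpanRoots S A :=
  fun α hα => ⟨hα.2, {α}, fun _ => 1, by simpa using hα.1, by simp⟩

lemma reflV_mem_ratSpanRoots_iff {A : Set V} {α γ : V} (hγ : γ ∈ ratSpanRoots S A)
    (hα : α ∈ S.Φ) : reflV γ α ∈ ratSpanRoots S A ↔ α ∈ ratSpanRoots S A := by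
  let _ : Module ℚ V := Module.compHom V (algebraMap ℚ ℝ)
  rw [mem_ratSpanRoots_iff] at hγ
  obtain ⟨n, hn⟩ := S.crystallographic γ hγ.1 α hα
  have h_refl : reflV γ α = α - n • γ := by rw [reflV_apply, hn, Int.cast_smul_eq_zsmul]
  have h_span : reflV γ α ∈ Submodule.span ℚ A ↔ α ∈ Submodule.span ℚ A := by
    rw [h_refl, Submodule.sub_mem_iff_left _ (zsmul_mem hγ.2 n)]
  simp only [mem_ratSpanRoots_iff, h_span, hα, S.refl_mem γ hγ.1 α hα]

end Subsystems

theorem statement_3_general (S : RootSys V) {Φ'' : Set V} (hΦ'' : Φ'' ⊆ S.Φ) (lam : HStar V) :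
    (∀ Φ' : Set V, Φ' ⊆ S.Φ →
      PsiP S Φ'' S.Φ lam ∩ Φ' = PsiP S (Φ'' ∩ Φ') Φ' (restrictW Φ' lam)) ∧
    (∀ B : Set V,
      PsiPP S Φ'' S.Φ lam ∩ ratSpanRoots S (Φ'' ∪ B) =
        PsiPP S Φ'' (ratSpanRoots S (Φ'' ∪ B)) (restrictW (ratSpanRoots S (Φ'' ∪ B)) lam)) ∧
    (∀ B : Set V,
      PsiPP S Φ'' S.Φ lam ∩ ratSpanRoots S (singSet S lam ∪ B) =
        PsiPP S (Φ'' ∩ ratSpanRoots S (singSet S lam ∪ B)) (ratSpanRoots S (singSet S lam ∪ B))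
          (restrictW (ratSpanRoots S (singSet S lam ∪ B)) lam)) := by
  have h_sub (A : Set V) : ratSpanRoots S A ⊆ S.Φ := fun _ hγ => hγ.1
  refine ⟨fun Φ' hΦ' => psiP_inter_eq S Φ'' hΦ' lam, fun B => ?_, fun B => ?_⟩
  · have hΦ''_sub : Φ'' ⊆ ratSpanRoots S (Φ'' ∪ B) := fun α hα =>
      inter_subset_ratSpanRoots S _ ⟨Or.inl hα, hΦ'' hα⟩
    rw [psiPP_inter_eq S (h_sub _) fun _ _ _ hα _ => hΦ''_sub hα,
      Set.inter_eq_left.mpr hΦ''_sub]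
  · refine psiPP_inter_eq S (h_sub _) fun γ hγ α hα h_zero => ?_
    have h_sing : reflV γ α ∈ singSet S lam :=
      ⟨S.refl_mem γ hγ.1 α (hΦ'' hα), by rwa [← sRefl_apply]⟩
    rw [← reflV_mem_ratSpanRoots_iff S hγ (hΦ'' hα)]
    exact inter_subset_ratSpanRoots S _ ⟨Or.inl h_sing, h_sing.1⟩

/-- Lemma 3.11: for `λ ∈ Λ_I⁺`:
(1) for any subsystem `Φ' ⊆ Φ`, `Ψ_λ⁺ ∩ Φ' = Ψ⁺(λ|_{Φ'}, Φ_I ∩ Φ', Φ')`;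
(2) if `β ∈ Φ \ Φ_I`, `Ψ_λ⁺⁺ ∩ Φ_{β,1} = Ψ⁺⁺(λ|_{Φ_{β,1}}, Φ_I, Φ_{β,1})`;
(3) if `β ∈ Φ \ Φ_λ`, `Ψ_λ⁺⁺ ∩ Φ_{β,2} = Ψ⁺⁺(λ|_{Φ_{β,2}}, Φ_I ∩ Φ_{β,2}, Φ_{β,2})`. -/
theorem statement_3 {V : Type*} [NormedAddCommGroup V] [InnerProductSpace ℝ V]
    [FiniteDimensional ℝ V]
    (S : RootSys V) (I : Finset V) (hI : I ⊆ S.Δ)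
    (lam : HStar V) (hlam : lam ∈ LambdaP (I : Set V)) :
    (∀ Φ' : Set V, IsSubsystem S Φ' →
      PsiP S (PhiI S I) (S.Φ : Set V) lam ∩ Φ' =
        PsiP S (PhiI S I ∩ Φ') Φ' (restrictW Φ' lam)) ∧
    (∀ β ∈ (S.Φ : Set V), β ∉ PhiI S I →
      PsiPP S (PhiI S I) (S.Φ : Set V) lam ∩ ratSpanRoots S (PhiI S I ∪ {β}) =
        PsiPP S (PhiI S I) (ratSpanRoots S (PhiI S I ∪ {β}))
          (restrictW (ratSpanRoots S (PhiI S I ∪ {β})) lam)) ∧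
    (∀ β ∈ (S.Φ : Set V), β ∉ singSet S lam →
      PsiPP S (PhiI S I) (S.Φ : Set V) lam ∩ ratSpanRoots S (singSet S lam ∪ {β}) =
        PsiPP S (PhiI S I ∩ ratSpanRoots S (singSet S lam ∪ {β}))
          (ratSpanRoots S (singSet S lam ∪ {β}))
          (restrictW (ratSpanRoots S (singSet S lam ∪ {β})) lam)) := by
  obtain ⟨hΨ, hΨ₁, hΨ₂⟩ := statement_3_general S (fun _ hα => hα.1 : PhiI S I ⊆ S.Φ) lam
  exact ⟨fun Φ' hΦ' => hΨ Φ' hΦ'.1, fun β _ _ => hΨ₁ {β}, fun β _ _ => hΨ₂ {β}⟩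

end JantzenGVM
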